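/- arXiv:2301.03917 — 4 statements merged into one kernel-verified Lean document; each statement's English description precedes it below -/
import Mathlib

section
/- Let G be a finite 2-group of order 2^n and let χ be a non-linear irreducible complex character of G. Then the number of elements g ∈ G with χ(g) = 0 is at least 2^(n-1) + 2. -/
open CategoryTheory

/-!
Write `d = χ 1` and let `A g` be the mean of `|χ (g ^ m)|²` over the odd `m < 2|G|`. Expanding `χ`
in the eigenvalues `lᵢ` of `g`, the terms of `|χ (g ^ m)|²` are `(lᵢ / lⱼ) ^ m`, and the mean of
`w ^ m` over odd `m` is `1`, `-1` or `0` according to whether `w = 1`, `w = -1` or neither. So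
`A g` is an integer, and pairing `(i, j)` with `(j, i)` shows that it has the parity of `d`.

In a 2-group odd powers are bijections, hence `∑ g, A g = ∑ g, |χ g|² = |G|`. If `d > 1` were odd,
every `A g` would be at least `1` and `A 1 = d² > 1`, which is too much; so every `A g` is even,
and at least `2` where `χ g ≠ 0`. By Schur's lemma `A z = d²` on the centre, so
`|G| ≥ 2 #{g | χ g ≠ 0} + (d² - 2) |Z(G)|`, and `|Z(G)| ≥ 2`.
-/

open Finset Module

section SymmetricSums

theorem sum_sum_eq_sum_diag_of_charTwo {ι R : Type*} [Semiring R] [CharP R 2] (s : Finset ι)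
    {c : ι → ι → R} (hc : ∀ i j, c i j = c j i) :
    ∑ i ∈ s, ∑ j ∈ s, c i j = ∑ i ∈ s, c i i := by
  classical
  have hoff : ∑ p ∈ s.offDiag, c p.1 p.2 = 0 := by
    refine Finset.sum_involution (fun p _ ↦ p.swap) (fun p _ ↦ ?_) (fun p hp _ h ↦ ?_)
      (fun p hp ↦ ?_) (fun p _ ↦ p.swap_swap)
    · rw [Prod.fst_swap, Prod.snd_swap, hc p.2 p.1, CharTwo.add_self_eq_zero]
    · exact (mem_offDiag.1 hp).2.2 (congrArg Prod.snd h)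
    · obtain ⟨h₁, h₂, hne⟩ := mem_offDiag.1 hp
      exact mem_offDiag.2 ⟨h₂, h₁, hne.symm⟩
  rw [← sum_product', ← diag_union_offDiag, sum_union (disjoint_diag_offDiag s), hoff, add_zero,
    sum_diag]

end SymmetricSums

section EqSign

open Classical in
/-- The sign relating two elements that agree up to sign: `1` if `a = b`, `-1` if `a = -b`, and `0`
otherwise. Where `a = b = -b` the value is `1`. -/
noncomputable def eqSign {R : Type*} [Neg R] (a b : R) : ℤ :=
  if a = b then 1 else if a = -b then -1 else 0

theorem eqSign_self {R : Type*} [Neg R] (a : R) : eqSign a a = 1 := if_pos rfl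

theorem eqSign_comm {R : Type*} [InvolutiveNeg R] (a b : R) : eqSign a b = eqSign b a := by
  classical
  have hneg : a = -b ↔ b = -a := by rw [eq_comm, neg_eq_iff_eq_neg]
  exact if_congr eq_comm rfl (if_congr hneg rfl rfl)

theorem eqSign_div_one {F : Type*} [DivisionRing F] (a : F) {b : F} (hb : b ≠ 0) :
    eqSign (a / b) 1 = eqSign a b := by
  classical
  have hneg : a / b = -1 ↔ a = -b := by rw [div_eq_iff hb, neg_one_mul]
  exact if_congr (div_eq_one_iff_eq hb) rfl (if_congr hneg rfl rfl)

theorem sum_sum_eqSign_modEq_card {ι R : Type*} [Fintype ι] [InvolutiveNeg R] (l : ι → R) :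
    ∑ i, ∑ j, eqSign (l i) (l j) ≡ Fintype.card ι [ZMOD 2] := by
  refine (ZMod.intCast_eq_intCast_iff _ _ 2).1 ?_
  push_cast
  rw [sum_sum_eq_sum_diag_of_charTwo univ fun i j ↦ by rw [eqSign_comm]]
  simp [eqSign_self]

theorem sum_odd_pow_eq_mul_eqSign {R : Type*} [Ring R] [NoZeroDivisors R] {w : R} {K : ℕ}
    (hw : w ^ (2 * K) = 1) :
    ∑ k ∈ range K, w ^ (2 * k + 1) = K * (eqSign w 1 : R) := by
  by_cases hpos : w = 1
  · simp [hpos, eqSign]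
  by_cases hneg : w = -1
  · subst hneg
    simp [eqSign, hpos, pow_succ, pow_mul]
  have hsq : w ^ 2 - 1 ≠ 0 := fun h ↦
    (mul_self_eq_one_iff.1 (sq w ▸ sub_eq_zero.1 h)).elim hpos hneg
  have hgeom : ∑ k ∈ range K, (w ^ 2) ^ k = 0 := by
    refine (mul_eq_zero.1 ?_).resolve_left hsq
    rw [mul_geom_sum, ← pow_mul, hw, sub_self]
  have hodd (k : ℕ) : w ^ (2 * k + 1) = (w ^ 2) ^ k * w := by rw [pow_succ, pow_mul]
  simp only [hodd, ← sum_mul, hgeom, eqSign, if_neg hpos, if_neg hneg, zero_mul, Int.cast_zero,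
    mul_zero]

theorem sum_normSq_sum_odd_pow_eq_mul_sum_eqSign {ι : Type*} [Fintype ι] {K : ℕ} (hK : K ≠ 0)
    {l : ι → ℂ} (hl : ∀ i, l i ^ (2 * K) = 1) :
    ∑ k ∈ range K, ‖∑ i, l i ^ (2 * k + 1)‖ ^ 2 = K * ∑ i, ∑ j, (eqSign (l i) (l j) : ℝ) := by
  have hnorm (i : ι) : ‖l i‖ = 1 := Complex.norm_eq_one_of_pow_eq_one (hl i) (by lia)
  have hne (i : ι) : l i ≠ 0 := norm_ne_zero_iff.1 (by simp [hnorm i])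
  have hexpand (m : ℕ) : (‖∑ i, l i ^ m‖ : ℂ) ^ 2 = ∑ i, ∑ j, (l i / l j) ^ m := by
    rw [← Complex.mul_conj', map_sum, sum_mul_sum]
    simp only [map_pow, ← Complex.inv_eq_conj (hnorm _), ← mul_pow, ← div_eq_mul_inv]
  have hmean (i j : ι) :
      ∑ k ∈ range K, (l i / l j) ^ (2 * k + 1) = K * (eqSign (l i) (l j) : ℂ) := by
    rw [sum_odd_pow_eq_mul_eqSign (by rw [div_pow, hl, hl, div_one]), eqSign_div_one _ (hne j)]
  apply Complex.ofReal_injective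
  push_cast
  simp only [hexpand, mul_sum, ← hmean]
  rw [sum_comm]
  exact sum_congr rfl fun i _ ↦ sum_comm

end EqSign

section FiniteOrderEndomorphisms

variable {K V : Type*} [Field K] [AddCommGroup V] [Module K V] {f : End K V}

theorem isSemisimple_of_pow_eq_one {n : ℕ} (hn : (n : K) ≠ 0) (hf : f ^ n = 1) :
    f.IsSemisimple :=
  End.isSemisimple_of_squarefree_aeval_eq_zero
    (Polynomial.separable_X_pow_sub_C 1 hn one_ne_zero).squarefree (by simp [hf])

theorem exists_basis_hasEigenvector_of_isSemisimple [IsAlgClosed K] [FiniteDimensional K V]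
    (hf : f.IsSemisimple) :
    ∃ (b : Basis (Fin (finrank K V)) K V) (l : Fin (finrank K V) → K),
      ∀ i, f.HasEigenvector (l i) (b i) := by
  classical
  have hint : DirectSum.IsInternal f.eigenspace :=
    DirectSum.isInternal_submodule_of_iSupIndep_of_iSup_eq_top f.eigenspaces_iSupIndep
      hf.iSup_eigenspace_eq_top
  let b := hint.collectedBasis fun μ ↦ finBasis K (f.eigenspace μ)
  have := Finite.finite_basis b
  have := Fintype.ofFinite (Σ μ, Fin (finrank K (f.eigenspace μ)))
  let e := Fintype.equivFinOfCardEq (finrank_eq_card_basis b).symm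
  refine ⟨b.reindex e, fun i ↦ (e.symm i).1, fun i ↦ ⟨?_, (b.reindex e).ne_zero i⟩⟩
  rw [b.reindex_apply]
  exact hint.collectedBasis_mem _ _

variable {R M : Type*} [CommRing R] [AddCommGroup M] [Module R M] {φ : End R M}

theorem trace_pow_eq_sum_pow_of_hasEigenvector {ι : Type*} [Fintype ι] (b : Basis ι R M)
    {l : ι → R} (hb : ∀ i, φ.HasEigenvector (l i) (b i)) (k : ℕ) :
    LinearMap.trace R M (φ ^ k) = ∑ i, l i ^ k := by
  classical
  simp [LinearMap.trace_eq_matrix_trace R b, Matrix.trace, LinearMap.toMatrix_apply,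
    (hb _).pow_apply]

theorem eigenvalue_pow_eq_one [IsDomain R] [IsTorsionFree R M] {n : ℕ} (hφ : φ ^ n = 1) {μ : R}
    {v : M} (hv : φ.HasEigenvector μ v) : μ ^ n = 1 := by
  refine smul_left_injective R hv.2 ?_
  simp only [← hv.pow_apply, hφ, End.one_apply, one_smul]

end FiniteOrderEndomorphisms

section Characters

variable {k G : Type*} [Field k] [IsAlgClosed k] [Group G]

theorem exists_char_pow_eq_sum_pow [NeZero (Nat.card G : k)] (V : FDRep k G) (g : G) :
    ∃ l : Fin (finrank k V) → k,
      (∀ i, l i ^ Nat.card G = 1) ∧ ∀ m : ℕ, V.character (g ^ m) = ∑ i, l i ^ m := by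
  have hg : V.ρ g ^ Nat.card G = 1 := by rw [← map_pow, pow_card_eq_one', map_one]
  obtain ⟨b, l, hb⟩ := exists_basis_hasEigenvector_of_isSemisimple
    (isSemisimple_of_pow_eq_one (NeZero.ne (Nat.card G : k)) hg)
  refine ⟨l, fun i ↦ eigenvalue_pow_eq_one hg (hb i), fun m ↦ ?_⟩
  rw [FDRep.character, map_pow, trace_pow_eq_sum_pow_of_hasEigenvector b hb]

theorem char_inv_eq_conj [Finite G] (V : FDRep ℂ G) (g : G) :
    V.character g⁻¹ = starRingEnd ℂ (V.character g) := by
  obtain ⟨l, hl, hchar⟩ := exists_char_pow_eq_sum_pow V g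
  have hcard : Nat.card G ≠ 0 := Nat.card_pos.ne'
  have hinv : g⁻¹ = g ^ (Nat.card G - 1) :=
    (eq_inv_of_mul_eq_one_left (by rw [pow_sub_one_mul hcard, pow_card_eq_one'])).symm
  have hconj (i) : l i ^ (Nat.card G - 1) = starRingEnd ℂ (l i) := by
    rw [← Complex.inv_eq_conj (Complex.norm_eq_one_of_pow_eq_one (hl i) hcard)]
    exact eq_inv_of_mul_eq_one_left (by rw [pow_sub_one_mul hcard, hl])
  calc V.character g⁻¹ = ∑ i, starRingEnd ℂ (l i) := by simp only [hinv, hchar, hconj]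
    _ = starRingEnd ℂ (V.character g) := by simpa using congrArg (starRingEnd ℂ) (hchar 1).symm

theorem sum_normSq_char_eq_card [Fintype G] (V : FDRep ℂ G) [Simple V] :
    ∑ g, ‖V.character g‖ ^ 2 = Nat.card G := by
  have hcard : (Nat.card G : ℂ) ≠ 0 := NeZero.ne _
  have := invertibleOfNonzero hcard
  have horth : ∑ g, V.character g * V.character g⁻¹ = Nat.card G := by
    have h := FDRep.char_orthonormal V V
    rw [if_pos ⟨Iso.refl V⟩, inv_mul_eq_one₀ hcard] at h
    exact h.symm
  apply Complex.ofReal_injective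
  push_cast
  simpa only [char_inv_eq_conj, Complex.mul_conj'] using horth

theorem finrank_sq_le_card [Finite G] (V : FDRep ℂ G) [Simple V] :
    finrank ℂ V ^ 2 ≤ Nat.card G := by
  have := Fintype.ofFinite G
  have hle := single_le_sum (fun g _ ↦ sq_nonneg ‖V.character g‖) (mem_univ (1 : G))
  rw [sum_normSq_char_eq_card, FDRep.char_one, Complex.norm_natCast] at hle
  exact_mod_cast hle

theorem exists_ρ_eq_smul_one_of_mem_center (V : FDRep k G) [Simple V] {z : G}
    (hz : z ∈ Subgroup.center G) : ∃ c : k, V.ρ z = c • 1 := by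
  let φ : V ⟶ V := ⟨Action.ρ V z, fun g ↦ by
    change Action.ρ V z * Action.ρ V g = Action.ρ V g * Action.ρ V z
    rw [← map_mul, ← map_mul, Subgroup.mem_center_iff.1 hz g]⟩
  obtain ⟨c, hc⟩ := endomorphism_simple_eq_smul_id k φ
  exact ⟨c, (congrArg (fun ψ : V ⟶ V ↦ ψ.hom.hom.hom) hc).symm⟩

theorem norm_char_of_mem_center [Finite G] (V : FDRep ℂ G) [Simple V] {z : G}
    (hz : z ∈ Subgroup.center G) : ‖V.character z‖ = finrank ℂ V := by
  obtain ⟨c, hc⟩ := exists_ρ_eq_smul_one_of_mem_center V hz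
  have hpow (m : ℕ) : V.character (z ^ m) = c ^ m * finrank ℂ V := by
    rw [FDRep.character, map_pow, hc, smul_pow, one_pow, map_smul, LinearMap.trace_one, smul_eq_mul]
  have hz₁ : V.character z = c * finrank ℂ V := by simpa using hpow 1
  rcases eq_or_ne (finrank ℂ V : ℂ) 0 with hd | hd
  · simp [hz₁, Nat.cast_eq_zero.1 hd]
  · have hroot : c ^ Nat.card G = 1 := by
      simpa [pow_card_eq_one', hd] using hpow (Nat.card G)
    rw [hz₁, norm_mul, Complex.norm_eq_one_of_pow_eq_one hroot Nat.card_pos.ne', one_mul,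
      Complex.norm_natCast]

end Characters

section OddMeanNormSq

/-- The mean of `‖χ (g ^ m)‖ ^ 2` over the odd exponents `m < 2 * Nat.card G`. For a character of a
2-group it is an integer-valued replacement for `‖χ g‖ ^ 2` with the same sum over the group. -/
noncomputable def oddMeanNormSq {G : Type*} [Monoid G] (χ : G → ℂ) (g : G) : ℝ :=
  (∑ k ∈ range (Nat.card G), ‖χ (g ^ (2 * k + 1))‖ ^ 2) / Nat.card G

theorem oddMeanNormSq_nonneg {G : Type*} [Monoid G] (χ : G → ℂ) (g : G) :
    0 ≤ oddMeanNormSq χ g := by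
  unfold oddMeanNormSq
  positivity

variable {G : Type*} [Group G]

theorem oddMeanNormSq_pos [Finite G] {χ : G → ℂ} {g : G} (hg : χ g ≠ 0) :
    0 < oddMeanNormSq χ g := by
  have hcard : 0 < Nat.card G := Nat.card_pos
  refine div_pos (sum_pos' (fun _ _ ↦ by positivity) ⟨0, mem_range.2 hcard, ?_⟩)
    (Nat.cast_pos.2 hcard)
  simpa using pow_pos (norm_pos_iff.2 hg) 2

theorem sum_oddMeanNormSq [Fintype G] (hG : IsPGroup 2 G) (χ : G → ℂ) :
    ∑ g, oddMeanNormSq χ g = ∑ g, ‖χ g‖ ^ 2 := by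
  have hcard : (Nat.card G : ℝ) ≠ 0 := NeZero.ne _
  have hperm (k : ℕ) : ∑ g, ‖χ (g ^ (2 * k + 1))‖ ^ 2 = ∑ g, ‖χ g‖ ^ 2 :=
    Equiv.sum_comp (hG.powEquiv (n := 2 * k + 1) (by simp)) fun g ↦ ‖χ g‖ ^ 2
  simp only [oddMeanNormSq]
  rw [← sum_div, sum_comm, div_eq_iff hcard]
  simp only [hperm, sum_const, card_range, nsmul_eq_mul]
  exact mul_comm _ _

variable [Finite G] (V : FDRep ℂ G)

theorem exists_int_oddMeanNormSq_char_eq (g : G) :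
    ∃ A : ℤ, A ≡ finrank ℂ V [ZMOD 2] ∧ oddMeanNormSq V.character g = A := by
  obtain ⟨l, hl, hchar⟩ := exists_char_pow_eq_sum_pow V g
  have hcard : Nat.card G ≠ 0 := Nat.card_pos.ne'
  refine ⟨∑ i, ∑ j, eqSign (l i) (l j), by simpa using sum_sum_eqSign_modEq_card l, ?_⟩
  simp only [oddMeanNormSq, hchar]
  rw [sum_normSq_sum_odd_pow_eq_mul_sum_eqSign hcard fun i ↦ by rw [mul_comm, pow_mul, hl, one_pow],
    mul_div_cancel_left₀ _ (Nat.cast_ne_zero.2 hcard)]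
  push_cast
  rfl

theorem one_le_oddMeanNormSq_char_of_odd (hd : Odd (finrank ℂ V)) (g : G) :
    1 ≤ oddMeanNormSq V.character g := by
  obtain ⟨A, hmod, hA⟩ := exists_int_oddMeanNormSq_char_eq V g
  have hnonneg : 0 ≤ A := by exact_mod_cast hA ▸ oddMeanNormSq_nonneg V.character g
  obtain ⟨m, hm⟩ := hd
  have hpos : 1 ≤ A := by
    rw [Int.ModEq] at hmod
    lia
  rw [hA]
  exact_mod_cast hpos

theorem two_le_oddMeanNormSq_char_of_even (hd : Even (finrank ℂ V)) {g : G}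
    (hg : V.character g ≠ 0) : 2 ≤ oddMeanNormSq V.character g := by
  obtain ⟨A, hmod, hA⟩ := exists_int_oddMeanNormSq_char_eq V g
  have hpos : 0 < A := by exact_mod_cast hA ▸ oddMeanNormSq_pos hg
  obtain ⟨m, hm⟩ := hd
  have htwo : 2 ≤ A := by
    rw [Int.ModEq] at hmod
    lia
  rw [hA]
  exact_mod_cast htwo

theorem oddMeanNormSq_char_of_mem_center [Simple V] {z : G} (hz : z ∈ Subgroup.center G) :
    oddMeanNormSq V.character z = finrank ℂ V ^ 2 := by
  have hcard : (Nat.card G : ℝ) ≠ 0 := NeZero.ne _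
  simp only [oddMeanNormSq, norm_char_of_mem_center V (pow_mem hz _), sum_const, card_range,
    nsmul_eq_mul]
  exact mul_div_cancel_left₀ _ hcard

end OddMeanNormSq

section TwoGroups

variable {G : Type*} [Group G] [Finite G] (V : FDRep ℂ G) [Simple V]

theorem even_finrank_of_isPGroup_two (hG : IsPGroup 2 G) (hd : 1 < finrank ℂ V) :
    Even (finrank ℂ V) := by
  have := Fintype.ofFinite G
  by_contra hodd
  have hone : 1 < oddMeanNormSq V.character 1 := by
    rw [oddMeanNormSq_char_of_mem_center V (one_mem _)]
    exact_mod_cast Nat.one_lt_pow two_ne_zero hd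
  have hlt : ∑ _g : G, (1 : ℝ) < ∑ g, oddMeanNormSq V.character g :=
    sum_lt_sum (fun g _ ↦ one_le_oddMeanNormSq_char_of_odd V (Nat.not_even_iff_odd.1 hodd) g)
      ⟨1, mem_univ 1, hone⟩
  rw [sum_oddMeanNormSq hG, sum_normSq_char_eq_card] at hlt
  simp at hlt

theorem boole_add_boole_le_oddMeanNormSq_char (hd : Even (finrank ℂ V)) (g : G)
    [Decidable (V.character g ≠ 0)] [Decidable (g ∈ Subgroup.center G)] :
    2 * (if V.character g ≠ 0 then 1 else 0) +
      ((finrank ℂ V : ℝ) ^ 2 - 2) * (if g ∈ Subgroup.center G then 1 else 0) ≤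
      oddMeanNormSq V.character g := by
  by_cases hz : g ∈ Subgroup.center G
  · rw [oddMeanNormSq_char_of_mem_center V hz, if_pos hz]
    split_ifs <;> linarith
  · rw [if_neg hz, mul_zero, add_zero]
    split_ifs with hg
    · simpa using two_le_oddMeanNormSq_char_of_even V hd hg
    · simpa using oddMeanNormSq_nonneg V.character g

theorem card_add_card_center_mul_finrank_sq_le (hG : IsPGroup 2 G) (hd : 1 < finrank ℂ V) :
    Nat.card G + Nat.card (Subgroup.center G) * finrank ℂ V ^ 2 ≤
      2 * ({g | V.character g = 0}.ncard + Nat.card (Subgroup.center G)) := by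
  classical
  have := Fintype.ofFinite G
  have hsum := sum_le_sum fun g (_ : g ∈ univ) ↦
    boole_add_boole_le_oddMeanNormSq_char V (even_finrank_of_isPGroup_two V hG hd) g
  rw [sum_oddMeanNormSq hG, sum_normSq_char_eq_card, sum_add_distrib, ← mul_sum, ← mul_sum,
    sum_boole, sum_boole] at hsum
  have hcenter : #{g | g ∈ Subgroup.center G} = Nat.card (Subgroup.center G) :=
    (Nat.subtype_card _ fun _ ↦ mem_filter_univ _).symm
  have hsplit : {g | V.character g = 0}.ncard + #{g | V.character g ≠ 0} = Nat.card G := by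
    rw [Set.ncard_eq_toFinset_card', Set.toFinset_ofPred, card_filter_add_card_filter_not,
      card_univ, Nat.card_eq_fintype_card]
  rw [hcenter] at hsum
  rify at hsplit ⊢
  linarith

theorem two_le_card_center_of_one_lt_finrank (hG : IsPGroup 2 G) (hd : 1 < finrank ℂ V) :
    2 ≤ Nat.card (Subgroup.center G) := by
  have : Fact (Nat.Prime 2) := ⟨Nat.prime_two⟩
  have : Nontrivial G := Finite.one_lt_card_iff_nontrivial.1
    ((Nat.one_lt_pow two_ne_zero hd).trans_le (finrank_sq_le_card V))
  have := hG.center_nontrivial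
  exact Finite.one_lt_card

end TwoGroups

/-- If `G` is a finite 2-group of order `2^n` and `χ` is a non-linear
irreducible complex character of `G` (the character of a simple representation `V`),
then `χ` vanishes at at least `2^(n-1) + 2` elements of `G`. -/
theorem stmt0 {G : Type} [Group G] [Fintype G] {n : ℕ}
    (hG : Fintype.card G = 2 ^ n)
    (V : FDRep ℂ G) (hV : Simple V)
    (hnl : 1 < Module.finrank ℂ V) :
    2 ^ (n - 1) + 2 ≤ {g : G | V.character g = 0}.ncard := by
  have hcard : Nat.card G = 2 ^ n := by rw [Nat.card_eq_fintype_card, hG]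
  have h2 : IsPGroup 2 G := .of_card hcard
  have hcenter := two_le_card_center_of_one_lt_finrank V h2 hnl
  have hn : n ≠ 0 := by
    rintro rfl
    have := Subgroup.card_le_card_group (Subgroup.center G)
    lia
  have hmain := card_add_card_center_mul_finrank_sq_le V h2 hnl
  have hpow : 2 * 2 ^ (n - 1) = 2 ^ n := mul_pow_sub_one hn 2
  have hd : 4 ≤ finrank ℂ V ^ 2 := Nat.pow_le_pow_left hnl 2
  have : 2 ^ n + 4 ≤ 2 * {g : G | V.character g = 0}.ncard := by
    rw [hcard] at hmain
    nlinarith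
  lia
end

section
/- Let p be a prime and let G be a finite p-group of order p^n. If χ is a non-linear irreducible complex character of G, then χ(g) = 0 for at least p^n − p^(n−1) + p^2 − p elements g ∈ G. -/
open CategoryTheory

/-!
Let `ρ` afford `χ`, let `N = ker ρ`, and let `N < Z < W` be the first steps of the upper central
series of `G` above `N`. By Schur's lemma `Z` acts by scalars. So if `⁅a, b⁆ ∈ Z \ N`, then `ρ b` is
conjugate to `c • ρ b` for a scalar `c ≠ 1`, and `χ b = 0`. Fix `x ∈ W \ Z` and let `C < G` be the
centralizer of `x` modulo `N`. Then `χ` vanishes outside `C`, because of commutators with `x`, and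
on `W \ Z`. Here `C` has index at least `p`, while `C ⊓ W` contains `x` and so properly contains
`Z`, which has order at least `p`. This gives `p ^ n - p ^ (n - 1)` zeros outside `C` and
`p ^ 2 - p` inside.
-/

open scoped commutatorElement

section UpperCentralSeries

variable {G : Type*} [Group G] (N : Subgroup G) [N.Normal]

instance upperCentralSeriesStep_normal : N.upperCentralSeriesStep.Normal := by
  rw [N.upperCentralSeriesStep_eq_comap_center]
  infer_instance

theorem le_upperCentralSeriesStep : N ≤ N.upperCentralSeriesStep := by
  rw [N.upperCentralSeriesStep_eq_comap_center]
  exact QuotientGroup.le_comap_mk' N _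

variable {N} in
theorem lt_upperCentralSeriesStep [Group.IsNilpotent G] (hN : N ≠ ⊤) :
    N < N.upperCentralSeriesStep := by
  have : Nontrivial (G ⧸ N) := QuotientGroup.nontrivial_iff.mpr hN
  have hcenter : ⊥ < Subgroup.center (G ⧸ N) :=
    bot_lt_iff_ne_bot.mpr (Group.IsNilpotent.center_ne_bot _)
  calc
    N = (⊥ : Subgroup (G ⧸ N)).comap (QuotientGroup.mk' N) := by
      rw [MonoidHom.comap_bot, QuotientGroup.ker_mk']
    _ < (Subgroup.center (G ⧸ N)).comap (QuotientGroup.mk' N) :=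
      (Subgroup.comap_lt_comap_of_surjective (QuotientGroup.mk'_surjective N)).mpr hcenter
    _ = N.upperCentralSeriesStep := N.upperCentralSeriesStep_eq_comap_center.symm

end UpperCentralSeries

theorem commutatorElement_mem_comm {G : Type*} [Group G] {H : Subgroup G} {a b : G} :
    ⁅a, b⁆ ∈ H ↔ ⁅b, a⁆ ∈ H := by
  rw [← commutatorElement_inv, inv_mem_iff]

theorem commutatorElement_mem_ker_iff_commute {G M : Type*} [Group G] [Monoid M] (f : G →* M)
    {a b : G} : ⁅a, b⁆ ∈ f.ker ↔ Commute (f a) (f b) := by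
  have hcomm : ⁅a, b⁆ = a * b * (b * a)⁻¹ := by group
  rw [hcomm, (inferInstance : f.ker.Normal).mem_comm_iff, ← f.eq_iff, map_mul, map_mul]
  rfl

section CentralizerMod

variable {G : Type*} [Group G] (N : Subgroup G) [N.Normal]

/-- The centralizer of `x` modulo the normal subgroup `N`: the preimage in `G` of the centralizer
of the image of `x` in `G ⧸ N`. -/
def centralizerMod (x : G) : Subgroup G :=
  (Subgroup.centralizer {(x : G ⧸ N)}).comap (QuotientGroup.mk' N)

variable {N} {x g : G}

theorem mem_centralizerMod_iff : g ∈ centralizerMod N x ↔ ⁅x, g⁆ ∈ N := by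
  conv_rhs => rw [← QuotientGroup.ker_mk' N, commutatorElement_mem_ker_iff_commute]
  rw [centralizerMod, Subgroup.mem_comap, Subgroup.mem_centralizer_singleton_iff]
  exact eq_comm

theorem mem_centralizerMod_self : x ∈ centralizerMod N x := by
  rw [mem_centralizerMod_iff, commutatorElement_self]
  exact N.one_mem

theorem upperCentralSeriesStep_le_centralizerMod :
    N.upperCentralSeriesStep ≤ centralizerMod N x :=
  fun _ hz => mem_centralizerMod_iff.mpr (commutatorElement_mem_comm.mp (hz x))

theorem centralizerMod_eq_top_iff : centralizerMod N x = ⊤ ↔ x ∈ N.upperCentralSeriesStep := by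
  simp only [Subgroup.eq_top_iff', mem_centralizerMod_iff, Subgroup.mem_upperCentralSeriesStep]

end CentralizerMod

section CentralCommutators

variable {G : Type*} [Group G] (N : Subgroup G) [N.Normal]

/-- The elements of `G` having a commutator that is central but nontrivial modulo `N`. For `N` the
kernel of an irreducible representation, these are the zeros of its character counted below. -/
def centralCommutatorSet : Set G :=
  {b | ∃ a : G, ⁅a, b⁆ ∈ N.upperCentralSeriesStep ∧ ⁅a, b⁆ ∉ N}

variable {N} {x : G}

theorem compl_centralizerMod_subset_centralCommutatorSet
    (hx : x ∈ N.upperCentralSeriesStep.upperCentralSeriesStep) :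
    (centralizerMod N x : Set G)ᶜ ⊆ centralCommutatorSet N :=
  fun b hb => ⟨x, hx b, fun hxb => hb (mem_centralizerMod_iff.mpr hxb)⟩

theorem sdiff_upperCentralSeriesStep_subset_centralCommutatorSet :
    (N.upperCentralSeriesStep.upperCentralSeriesStep : Set G) \ N.upperCentralSeriesStep ⊆
      centralCommutatorSet N := by
  rintro b ⟨hbW, hbZ⟩
  obtain ⟨a, hba⟩ : ∃ a, ⁅b, a⁆ ∉ N := not_forall.mp hbZ
  exact ⟨a, commutatorElement_mem_comm.mp (hbW a), mt commutatorElement_mem_comm.mp hba⟩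

end CentralCommutators

section Counting

variable {G : Type*} [Group G] [Finite G] {p n : ℕ}

theorem prime_mul_card_le_card_of_lt [Fact p.Prime] (hG : IsPGroup p G) {H K : Subgroup G}
    (hHK : H < K) : p * Nat.card H ≤ Nat.card K := by
  have hindex : Nat.card H * H.relIndex K = Nat.card K := by
    simpa only [Subgroup.relIndex_bot_left] using Subgroup.relIndex_mul_relIndex ⊥ H K bot_le hHK.le
  obtain ⟨k, hk⟩ : ∃ k, H.relIndex K = p ^ k := (hG.to_subgroup K).index (H.subgroupOf K)
  have hk0 : k ≠ 0 := by
    rintro rfl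
    exact hHK.not_ge (Subgroup.relIndex_eq_one.mp hk)
  calc
    p * Nat.card H ≤ p ^ k * Nat.card H := Nat.mul_le_mul_right _ (Nat.le_self_pow hk0 p)
    _ = Nat.card K := by rw [← hk, mul_comm, hindex]

theorem pow_sub_pow_pred_le_ncard_compl (hp : p.Prime) (hG : Nat.card G = p ^ n) {C : Subgroup G}
    (hC : C ≠ ⊤) : p ^ n - p ^ (n - 1) ≤ (C : Set G)ᶜ.ncard := by
  have := Fact.mk hp
  have hindex : p * Nat.card C ≤ p ^ n := by
    simpa only [Subgroup.card_top, hG] using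
      prime_mul_card_le_card_of_lt (IsPGroup.of_card hG) hC.lt_top
  have hn : n ≠ 0 := by
    rintro rfl
    exact hindex.not_gt (one_lt_mul_of_lt_of_le hp.one_lt Nat.card_pos)
  have hcard : Nat.card C ≤ p ^ (n - 1) := by
    rw [← mul_pow_sub_one hn] at hindex
    exact Nat.le_of_mul_le_mul_left hindex hp.pos
  rw [Set.ncard_compl, hG]
  exact Nat.sub_le_sub_left hcard _

theorem sq_sub_self_le_ncard_sdiff [Fact p.Prime] (hG : IsPGroup p G) {Z S : Subgroup G}
    (hZ : Z ≠ ⊥) (hZS : Z < S) : p ^ 2 - p ≤ ((S : Set G) \ Z).ncard := by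
  have hpZ : p ≤ Nat.card Z := by
    simpa only [Subgroup.card_bot, mul_one] using prime_mul_card_le_card_of_lt hG hZ.bot_lt
  calc
    p ^ 2 - p = (p - 1) * p := by rw [Nat.sub_one_mul, sq]
    _ ≤ (p - 1) * Nat.card Z := Nat.mul_le_mul_left _ hpZ
    _ = p * Nat.card Z - Nat.card Z := Nat.sub_one_mul _ _
    _ ≤ Nat.card S - Nat.card Z := Nat.sub_le_sub_right (prime_mul_card_le_card_of_lt hG hZS) _
    _ ≤ ((S : Set G) \ Z).ncard := Set.le_ncard_sdiff _ _

theorem pow_sub_pow_add_sq_sub_le_ncard_centralCommutatorSet (hp : p.Prime)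
    (hG : Nat.card G = p ^ n) {N : Subgroup G} [N.Normal] (hN : N.upperCentralSeriesStep ≠ ⊤) :
    p ^ n - p ^ (n - 1) + (p ^ 2 - p) ≤ (centralCommutatorSet N).ncard := by
  have := Fact.mk hp
  have hpG : IsPGroup p G := IsPGroup.of_card hG
  have := hpG.isNilpotent
  set Z := N.upperCentralSeriesStep
  have hNZ : N < Z :=
    lt_upperCentralSeriesStep (ne_top_of_le_ne_top hN (le_upperCentralSeriesStep N))
  obtain ⟨x, hxW, hxZ⟩ := SetLike.exists_of_lt (lt_upperCentralSeriesStep hN)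
  set W := Z.upperCentralSeriesStep
  set C := centralizerMod N x
  have hC : C ≠ ⊤ := mt centralizerMod_eq_top_iff.mp hxZ
  have hZS : Z < C ⊓ W := SetLike.lt_iff_le_and_exists.mpr
    ⟨le_inf upperCentralSeriesStep_le_centralizerMod (le_upperCentralSeriesStep Z),
      x, Subgroup.mem_inf.mpr ⟨mem_centralizerMod_self, hxW⟩, hxZ⟩
  have hdisj : Disjoint (C : Set G)ᶜ ((C ⊓ W : Subgroup G) \ Z : Set G) :=
    Set.disjoint_left.mpr fun _ hb hbS => hb hbS.1.1
  calc
    p ^ n - p ^ (n - 1) + (p ^ 2 - p)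
      ≤ (C : Set G)ᶜ.ncard + ((C ⊓ W : Subgroup G) \ Z : Set G).ncard :=
        add_le_add (pow_sub_pow_pred_le_ncard_compl hp hG hC)
          (sq_sub_self_le_ncard_sdiff hpG hNZ.ne_bot hZS)
    _ = ((C : Set G)ᶜ ∪ ((C ⊓ W : Subgroup G) \ Z : Set G)).ncard := (Set.ncard_union_eq hdisj).symm
    _ ≤ (centralCommutatorSet N).ncard := Set.ncard_le_ncard <| Set.union_subset
        (compl_centralizerMod_subset_centralCommutatorSet hxW)
        ((Set.sdiff_subset_sdiff_left inf_le_right).trans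
          sdiff_upperCentralSeriesStep_subset_centralCommutatorSet)

end Counting

section Representation

variable {k G V : Type*} [Field k] [Group G] [AddCommGroup V] [Module k V]
  {ρ : Representation k G V}

theorem character_eq_zero_of_commutatorElement_eq_algebraMap {a b : G} {c : k}
    (hc : ρ ⁅a, b⁆ = algebraMap k (Module.End k V) c) (hc1 : c ≠ 1) : ρ.character b = 0 := by
  have hconj : ρ (a * b * a⁻¹) = c • ρ b := by
    rw [← inv_mul_cancel_right (a * b * a⁻¹) b, ← commutatorElement_def, map_mul, hc,
      ← Algebra.smul_def]
  have hχ : c * ρ.character b = ρ.character b := by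
    calc
      c * ρ.character b = LinearMap.trace k V (c • ρ b) := (map_smul _ c _).symm
      _ = ρ.character (a * b * a⁻¹) := by rw [← hconj, Representation.character]
      _ = ρ.character b := ρ.char_conj b a
  exact (mul_left_eq_self₀.mp hχ).resolve_left hc1

theorem exists_eq_algebraMap_of_mem_upperCentralSeriesStep_ker
    (hρ : Subalgebra.centralizer k (Set.range ρ) = ⊥) {g : G}
    (hg : g ∈ ρ.ker.upperCentralSeriesStep) : ∃ c, ρ g = algebraMap k (Module.End k V) c := by
  have hcentral : ρ g ∈ Subalgebra.centralizer k (Set.range ρ) := by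
    rintro _ ⟨h, rfl⟩
    exact ((commutatorElement_mem_ker_iff_commute ρ).mp (hg h)).symm
  obtain ⟨c, hc⟩ := Algebra.mem_bot.mp (hρ ▸ hcentral)
  exact ⟨c, hc.symm⟩

theorem character_eq_zero_of_mem_centralCommutatorSet_ker
    (hρ : Subalgebra.centralizer k (Set.range ρ) = ⊥) {b : G}
    (hb : b ∈ centralCommutatorSet ρ.ker) : ρ.character b = 0 := by
  obtain ⟨a, hab, hab1⟩ := hb
  obtain ⟨c, hc⟩ := exists_eq_algebraMap_of_mem_upperCentralSeriesStep_ker hρ hab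
  refine character_eq_zero_of_commutatorElement_eq_algebraMap hc ?_
  rintro rfl
  exact hab1 (MonoidHom.mem_ker.mpr (hc.trans (map_one _)))

theorem upperCentralSeriesStep_ker_ne_top (hρ : Subalgebra.centralizer k (Set.range ρ) = ⊥)
    (hV : 1 < Module.finrank k V) : ρ.ker.upperCentralSeriesStep ≠ ⊤ := by
  intro htop
  have hscalar : Subalgebra.centralizer k (Set.range ρ) = ⊤ := by
    rw [Subalgebra.centralizer_eq_top_iff_subset]
    rintro _ ⟨g, rfl⟩
    obtain ⟨c, hc⟩ :=
      exists_eq_algebraMap_of_mem_upperCentralSeriesStep_ker hρ (htop ▸ Subgroup.mem_top g)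
    exact hc ▸ Subalgebra.algebraMap_mem _ c
  have := Module.finite_of_finrank_pos (zero_lt_one.trans hV)
  have := Module.nontrivial_of_finrank_pos (zero_lt_one.trans hV)
  have hEnd : Module.finrank k (Module.End k V) = 1 :=
    Subalgebra.bot_eq_top_iff_finrank_eq_one.mp (hρ.symm.trans hscalar)
  rw [Module.finrank_linearMap] at hEnd
  exact hV.ne' (Nat.eq_one_of_mul_eq_one_left hEnd)

end Representation

theorem centralizer_range_eq_bot_of_simple {k G : Type*} [Field k] [IsAlgClosed k] [Monoid G]
    (V : FDRep k G) [Simple V] : Subalgebra.centralizer k (Set.range V.ρ) = ⊥ := by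
  refine eq_bot_iff.mpr fun f hf => ?_
  let F : V ⟶ V :=
    { hom := FGModuleCat.ofHom f
      comm := fun g => by
        ext v
        exact LinearMap.congr_fun (hf (V.ρ g) ⟨g, rfl⟩).symm v }
  obtain ⟨c, hc⟩ := endomorphism_simple_eq_smul_id k F
  exact Algebra.mem_bot.mpr ⟨c, congrArg (fun φ : V ⟶ V => φ.hom.hom.hom) hc⟩

theorem stmt2_general {k G V : Type*} [Field k] [Group G] [Finite G] [AddCommGroup V] [Module k V]
    {p n : ℕ} (hp : p.Prime) (hG : Nat.card G = p ^ n) (ρ : Representation k G V)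
    (hρ : Subalgebra.centralizer k (Set.range ρ) = ⊥) (hV : 1 < Module.finrank k V) :
    p ^ n - p ^ (n - 1) + p ^ 2 - p ≤ {g : G | ρ.character g = 0}.ncard := by
  rw [Nat.add_sub_assoc (Nat.le_self_pow two_ne_zero p)]
  calc
    p ^ n - p ^ (n - 1) + (p ^ 2 - p) ≤ (centralCommutatorSet ρ.ker).ncard :=
      pow_sub_pow_add_sq_sub_le_ncard_centralCommutatorSet hp hG
        (upperCentralSeriesStep_ker_ne_top hρ hV)
    _ ≤ {g : G | ρ.character g = 0}.ncard :=
      Set.ncard_le_ncard fun _ => character_eq_zero_of_mem_centralCommutatorSet_ker hρ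

/-- If `G` is a finite `p`-group of order `p^n` and `χ` is a non-linear
irreducible complex character of `G`, then `χ(g) = 0` for at least
`p^n - p^(n-1) + p^2 - p` elements `g ∈ G`. -/
theorem stmt2 {G : Type} [Group G] [Fintype G] {p n : ℕ} (hp : p.Prime)
    (hG : Fintype.card G = p ^ n)
    (V : FDRep ℂ G) (hV : Simple V)
    (hnl : 1 < Module.finrank ℂ V) :
    p ^ n - p ^ (n - 1) + p ^ 2 - p ≤ {g : G | V.character g = 0}.ncard :=
  stmt2_general hp (Nat.card_eq_fintype_card.trans hG) V.ρ
    (centralizer_range_eq_bot_of_simple V) hnl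
end

section
/- Let p be a prime and let G be a finite p-group of order p^n. If some non-linear irreducible complex character χ of G vanishes at exactly p^n − p^(n−1) + p^2 − p elements of G, then G has maximal class (i.e., its nilpotency class equals n − 1) and G has an abelian subgroup of index p. -/
open CategoryTheory

/-- The nilpotency class of a group: the least `m` with `upperCentralSeries G m = ⊤`.
(For nilpotent groups this agrees with `Group.nilpotencyClass`.) -/
noncomputable def nilClass (G : Type*) [Group G] : ℕ :=
  sInf {m : ℕ | upperCentralSeries G m = ⊤}

/-!
Let `Z` be the centre of `G` and `S` the subgroup of elements that are central modulo the kernel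
of the representation. By Schur's lemma `S` acts by scalars, so the zeros of the character `χ` form
a union of cosets of `S`. As `p ^ 2` does not divide the number of zeros, `|S| = p`; this forces
`S = Z` and faithfulness. Consequently `χ` vanishes at every element that is conjugate to a
nontrivial central multiple of itself.

Take `x ∈ Z₂ \ Z`, where `Z₂` is the second centre, and let `C` be its centralizer, of index `p`.
All elements of `G \ C` and of `(Z₂ ∩ C) \ Z` are of that kind, which already accounts for
`p ^ n - p ^ (n - 1) + p ^ 2 - p` zeros; hence there are no others, and `|Z₂ ∩ C| = p ^ 2`. If `C`
were nonabelian, some noncentral `y ∈ C` would have a nontrivial commutator `⁅y, c⁆ ∈ Z` with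
`c ∈ C`. Then `y` is a zero, so `y ∈ Z₂ ∩ C`; but `Z₂ ∩ C` is generated by `Z` and `x`, and is
therefore central in `C`.

Finally, if `U` is an abelian subgroup of index `p` and `g ∉ U`, then `c ↦ ⁅g, c⁆` maps `Zᵢ₊₁ ∩ U`
to `Zᵢ ∩ U` with kernel inside `Z`. So `|Zᵢ ∩ U| ≤ p ^ i`, and the class is at least `n - 1`.
-/

open Subgroup
open scoped commutatorElement

section Commutators

variable {G : Type*} [Group G]

theorem exists_mem_notMem_forall_commutator_mem [Group.IsNilpotent G] {C A : Subgroup G}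
    [C.Normal] (hCA : ¬ C ≤ A) : ∃ y ∈ C, y ∉ A ∧ ∀ g, ⁅y, g⁆ ∈ A := by
  by_contra! hno
  have inf_le (i : ℕ) : Subgroup.upperCentralSeries G i ⊓ C ≤ A := by
    induction i with
    | zero => simp
    | succ i ih =>
      rintro y ⟨hyZ, hyC⟩
      by_contra hyA
      obtain ⟨g, hg⟩ := hno y hyC hyA
      exact hg (ih ⟨Subgroup.mem_upperCentralSeries_succ_iff.mp hyZ g,
        commutator_le_left C ⊤ (commutator_mem_commutator hyC (mem_top g))⟩)
  obtain ⟨m, hm⟩ := Group.IsNilpotent.nilpotent G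
  exact hCA (by simpa [hm] using inf_le m)

theorem exists_mem_center_ne_one_of_normal [Group.IsNilpotent G] {N : Subgroup G} [N.Normal]
    (hN : N ≠ ⊥) : ∃ z ∈ N, z ≠ 1 ∧ z ∈ center G := by
  obtain ⟨z, hzN, hz1, hz⟩ :=
    exists_mem_notMem_forall_commutator_mem (A := ⊥) (mt le_bot_iff.mp hN)
  exact ⟨z, hzN, hz1, mem_center_iff.mpr fun g ↦
    (commutatorElement_eq_one_iff_mul_comm.mp (mem_bot.mp (hz g))).symm⟩

theorem center_le_upperCentralSeriesStep (H : Subgroup G) [H.Normal] :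
    center G ≤ H.upperCentralSeriesStep := fun z hz g ↦ by
  rw [commutatorElement_eq_one_iff_mul_comm.mpr (mem_center_iff.mp hz g).symm]
  exact one_mem _

/-- The map `c ↦ ⁅y, c⁆` on a subgroup `H`, which is a homomorphism as soon as its values commute
with `H`. -/
def commutatorHom (y : G) (H : Subgroup G)
    (hy : ∀ c ∈ H, ⁅y, c⁆ ∈ centralizer (H : Set G)) : H →* G :=
  MonoidHom.mk' (fun c ↦ ⁅y, (c : G)⁆) fun c d ↦ by
    rw [Subgroup.coe_mul, commutatorElement_mul_right_eq_mul_conj,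
      mul_assoc, mul_assoc, ← mul_assoc (c : G), mem_centralizer_iff.mp (hy d d.2) c c.2,
      mul_inv_cancel_right]

theorem mem_range_commutatorHom {y : G} {H : Subgroup G}
    {hy : ∀ c ∈ H, ⁅y, c⁆ ∈ centralizer (H : Set G)} {d : G} :
    d ∈ (commutatorHom y H hy).range ↔ ∃ c ∈ H, ⁅y, c⁆ = d := by
  simp [commutatorHom]

theorem ker_commutatorHom (y : G) (H : Subgroup G)
    (hy : ∀ c ∈ H, ⁅y, c⁆ ∈ centralizer (H : Set G)) :
    (commutatorHom y H hy).ker = (centralizer {y}).subgroupOf H := by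
  ext c
  rw [MonoidHom.mem_ker, mem_subgroupOf, mem_centralizer_singleton_iff]
  exact commutatorElement_eq_one_iff_mul_comm.trans eq_comm

theorem relIndex_centralizer_singleton (y : G) (H : Subgroup G)
    (hy : ∀ c ∈ H, ⁅y, c⁆ ∈ centralizer (H : Set G)) :
    (centralizer {y}).relIndex H = Nat.card (commutatorHom y H hy).range := by
  rw [relIndex, ← ker_commutatorHom y H hy, index_ker]

theorem normal_range_commutatorHom {y : G} {C : Subgroup G} [hC : C.Normal]
    (hy : ∀ g, ⁅y, g⁆ ∈ centralizer (C : Set G)) :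
    (commutatorHom y C fun c _ ↦ hy c).range.Normal := by
  refine ⟨fun d hd g ↦ ?_⟩
  obtain ⟨c, hc, rfl⟩ := mem_range_commutatorHom.mp hd
  have hgc : g * c * g⁻¹ ∈ C := hC.conj_mem c hc g
  have hcomm : y * (g * c * g⁻¹) * y⁻¹ * ⁅y, g⁆⁻¹ = ⁅y, g⁆⁻¹ * (y * (g * c * g⁻¹) * y⁻¹) :=
    mem_centralizer_iff.mp (inv_mem (hy g)) _ (hC.conj_mem _ hgc y)
  refine mem_range_commutatorHom.mpr ⟨g * c * g⁻¹, hgc, ?_⟩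
  calc ⁅y, g * c * g⁻¹⁆
      = y * (g * c * g⁻¹) * y⁻¹ * ⁅y, g⁆⁻¹ * ⁅y, g⁆ * (g * c⁻¹ * g⁻¹) := by
        simp only [commutatorElement_def]; group
    _ = ⁅y, g⁆⁻¹ * (y * (g * c * g⁻¹) * y⁻¹) * ⁅y, g⁆ * (g * c⁻¹ * g⁻¹) := by rw [hcomm]
    _ = g * ⁅y, c⁆ * g⁻¹ := by simp only [commutatorElement_def]; group

/-- The elements conjugate to a nontrivial central multiple of themselves, encoded by
`b * a * b⁻¹ = ⁅a, b⁆⁻¹ * a`. The nonlinear irreducible character of the main theorem vanishes on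
this set. -/
def centrallyShiftedSet (G : Type*) [Group G] : Set G :=
  {a | ∃ b, ⁅a, b⁆ ∈ center G ∧ ⁅a, b⁆ ≠ 1}

theorem exists_mem_centrallyShiftedSet_of_not_le_centralizer [Group.IsNilpotent G]
    {C : Subgroup G} [C.Normal] (hC : ¬ C ≤ centralizer (C : Set G)) :
    ∃ y ∈ C, y ∉ centralizer (C : Set G) ∧ y ∈ centrallyShiftedSet G := by
  obtain ⟨y, hyC, hyA, hy⟩ := exists_mem_notMem_forall_commutator_mem hC
  have hnormal := normal_range_commutatorHom hy
  have hne : (commutatorHom y C fun c _ ↦ hy c).range ≠ ⊥ := fun hbot ↦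
    hyA <| mem_centralizer_iff.mpr fun c hc ↦ by
      have hyc : ⁅y, c⁆ ∈ (commutatorHom y C fun c _ ↦ hy c).range :=
        mem_range_commutatorHom.mpr ⟨c, hc, rfl⟩
      rw [hbot, mem_bot, commutatorElement_eq_one_iff_mul_comm] at hyc
      exact hyc.symm
  obtain ⟨z, hz, hz1, hzZ⟩ := exists_mem_center_ne_one_of_normal hne
  obtain ⟨c, -, rfl⟩ := mem_range_commutatorHom.mp hz
  exact ⟨y, hyC, hyA, c, hzZ, hz1⟩

theorem covBy_of_relIndex_prime {H K : Subgroup G} (hHK : H ≤ K) (hp : (H.relIndex K).Prime) :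
    H ⋖ K := by
  refine ⟨hHK.lt_of_not_ge fun hKH ↦ hp.ne_one (relIndex_eq_one.mpr hKH), fun L hHL hLK ↦ ?_⟩
  rw [← relIndex_mul_relIndex H L K hHL.le hLK.le, Nat.prime_mul_iff] at hp
  rcases hp with ⟨-, h⟩ | ⟨-, h⟩
  · exact hLK.not_ge (relIndex_eq_one.mp h)
  · exact hHL.not_ge (relIndex_eq_one.mp h)

theorem isCoatom_of_index_prime {H : Subgroup G} (hp : H.index.Prime) : IsCoatom H :=
  covBy_top_iff.mp (covBy_of_relIndex_prime le_top (by rwa [relIndex_top_right]))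

end Commutators

section MaximalClass

variable {G : Type*} [Group G]

theorem nilClass_eq_nilpotencyClass [Group.IsNilpotent G] :
    nilClass G = Group.nilpotencyClass G :=
  IsLeast.csInf_eq ⟨Subgroup.upperCentralSeries_nilpotencyClass,
    fun _ ↦ Subgroup.upperCentralSeries_eq_top_iff_nilpotencyClass_le.mp⟩

theorem isMulCommutative_of_card_eq_prime_pow {p n : ℕ} [Fact p.Prime]
    (hG : Nat.card G = p ^ n) (hn : n ≤ 2) : IsMulCommutative G := by
  interval_cases n
  · have : Subsingleton G := (Nat.card_eq_one_iff_unique.mp (by simpa using hG)).1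
    exact isMulCommutative_iff.mpr fun _ _ ↦ Subsingleton.elim _ _
  · have : IsCyclic G := isCyclic_of_prime_card (p := p) (by simpa using hG)
    infer_instance
  · exact IsPGroup.isMulCommutative_of_card_eq_prime_sq hG

theorem nilpotencyClass_le_max_one_of_card_eq_prime_pow {p n : ℕ} [hp : Fact p.Prime]
    (hG : Nat.card G = p ^ n) : Group.nilpotencyClass G ≤ max 1 (n - 1) := by
  induction n using Nat.strong_induction_on generalizing G with
  | _ n ih =>
    have : Finite G := Nat.finite_of_card_ne_zero (hG ▸ pow_ne_zero n hp.out.ne_zero)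
    have : Group.IsNilpotent G := (IsPGroup.of_card hG).isNilpotent
    rcases le_or_gt n 2 with hn | hn
    · exact (Group.IsNilpotent.nilpotencyClass_le_one_iff.mpr
        (isMulCommutative_of_card_eq_prime_pow hG hn)).trans (le_max_left _ _)
    have : Nontrivial G := (IsPGroup.nontrivial_iff_card (IsPGroup.of_card hG)).mpr
      ⟨n, by lia, hG⟩
    obtain ⟨k, hk, hZ⟩ := IsPGroup.card_center_eq_prime_pow hG (by lia)
    have hkn : k ≤ n := (Nat.pow_dvd_pow_iff_le_right hp.out.one_lt).mp
      (hZ ▸ hG ▸ card_subgroup_dvd_card (center G))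
    have hquot : Nat.card (G ⧸ center G) = p ^ (n - k) := by
      rw [← index_eq_card]
      apply Nat.eq_of_mul_eq_mul_left (pow_pos hp.out.pos k)
      rw [← hZ, card_mul_index, hG, hZ, ← pow_add, Nat.add_sub_cancel' hkn]
    have hclass := ih (n - k) (by lia) hquot
    rw [Group.nilpotencyClass_eq_quotient_center_plus_one]
    lia

theorem centralizer_singleton_inf_le_center {U : Subgroup G} [IsMulCommutative U]
    (hU : IsCoatom U) {g : G} (hg : g ∉ U) : centralizer {g} ⊓ U ≤ center G := by
  rintro c ⟨hcg, hcU⟩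
  have hle : U ≤ centralizer {c} := le_centralizer U |>.trans
    (centralizer_le (Set.singleton_subset_iff.mpr hcU))
  have hgc : g ∈ centralizer {c} :=
    mem_centralizer_singleton_iff.mpr (mem_centralizer_singleton_iff.mp hcg).symm
  have htop : centralizer {c} = ⊤ := hU.2 _ (lt_of_le_of_ne hle fun h ↦ hg (h ▸ hgc))
  exact mem_center_iff.mpr fun x ↦ mem_centralizer_singleton_iff.mp (htop ▸ mem_top x)

theorem card_upperCentralSeries_inf_le [Finite G] {U : Subgroup G} [U.Normal]
    [IsMulCommutative U] (hU : IsCoatom U) (i : ℕ) :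
    Nat.card (Subgroup.upperCentralSeries G i ⊓ U : Subgroup G) ≤ Nat.card (center G) ^ i := by
  obtain ⟨g, hg⟩ : ∃ g, g ∉ U := by simpa [eq_top_iff'] using hU.1
  induction i with
  | zero => simp
  | succ i ih =>
    set H := Subgroup.upperCentralSeries G (i + 1) ⊓ U
    have hmem (c : G) (hc : c ∈ H) : ⁅g, c⁆ ∈ Subgroup.upperCentralSeries G i ⊓ U := by
      refine mem_inf.mpr
        ⟨?_, commutator_le_right ⊤ U (commutator_mem_commutator (mem_top g) hc.2)⟩
      rw [← commutatorElement_inv]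
      exact inv_mem (Subgroup.mem_upperCentralSeries_succ_iff.mp hc.1 g)
    have hcentral (c : G) (hc : c ∈ H) : ⁅g, c⁆ ∈ centralizer (H : Set G) :=
      centralizer_le (inf_le_right : H ≤ U) (le_centralizer U (hmem c hc).2)
    have hker : Nat.card (centralizer {g} ⊓ H : Subgroup G) ≤ Nat.card (center G) :=
      card_le_of_le ((inf_le_inf_left _ inf_le_right).trans
        (centralizer_singleton_inf_le_center hU hg))
    have hrange : (centralizer {g}).relIndex H ≤ Nat.card (center G) ^ i := by
      rw [relIndex_centralizer_singleton g H hcentral]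
      refine (card_le_of_le fun d hd ↦ ?_).trans ih
      obtain ⟨c, hc, rfl⟩ := mem_range_commutatorHom.mp hd
      exact hmem c hc
    calc Nat.card H
        = Nat.card (centralizer {g} ⊓ H : Subgroup G) * (centralizer {g}).relIndex H := by
          rw [← inf_relIndex_right, ← relIndex_bot_left, ← relIndex_bot_left,
            relIndex_mul_relIndex _ _ _ bot_le inf_le_right]
      _ ≤ Nat.card (center G) * Nat.card (center G) ^ i := Nat.mul_le_mul hker hrange
      _ = Nat.card (center G) ^ (i + 1) := (pow_succ' _ _).symm

theorem card_eq_pow_pred_of_index_eq {p n : ℕ} (hp : 0 < p) (hn : n ≠ 0)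
    (hG : Nat.card G = p ^ n) {H : Subgroup G} (hH : H.index = p) :
    Nat.card H = p ^ (n - 1) := by
  apply Nat.eq_of_mul_eq_mul_right hp
  rw [pow_sub_one_mul hn, ← hG, ← H.card_mul_index, hH]

theorem nilpotencyClass_eq_of_card_center_eq_prime {p n : ℕ} [hp : Fact p.Prime] (hn : 2 ≤ n)
    (hG : Nat.card G = p ^ n) (hZ : Nat.card (center G) = p) {U : Subgroup G}
    [IsMulCommutative U] (hU : U.index = p) : Group.nilpotencyClass G = n - 1 := by
  have : Finite G := Nat.finite_of_card_ne_zero (hG ▸ pow_ne_zero n hp.out.ne_zero)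
  have : Group.IsNilpotent G := (IsPGroup.of_card hG).isNilpotent
  have : U.Normal := normal_of_index_eq_minFac_card
    (by rw [hU, hG, hp.out.pow_minFac (by lia)])
  have hle : Group.nilpotencyClass G ≤ max 1 (n - 1) :=
    nilpotencyClass_le_max_one_of_card_eq_prime_pow hG
  have hcard := card_upperCentralSeries_inf_le (isCoatom_of_index_prime (hU ▸ hp.out))
    (Group.nilpotencyClass G)
  rw [Subgroup.upperCentralSeries_nilpotencyClass, top_inf_eq, hZ,
    card_eq_pow_pred_of_index_eq hp.out.pos (by lia) hG hU,
    Nat.pow_le_pow_iff_right hp.out.one_lt] at hcard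
  lia

end MaximalClass

section CentrallyShifted

variable {G : Type*} [Group G] {x : G}

theorem commutatorElement_mem_center_of_mem_upperCentralSeries_two
    (hx : x ∈ Subgroup.upperCentralSeries G 2) (g : G) : ⁅x, g⁆ ∈ center G :=
  Subgroup.upperCentralSeries_one G ▸ Subgroup.mem_upperCentralSeries_succ_iff.mp hx g

theorem index_centralizer_dvd_card_center (hx : x ∈ Subgroup.upperCentralSeries G 2) :
    (centralizer {x}).index ∣ Nat.card (center G) := by
  have hcomm := commutatorElement_mem_center_of_mem_upperCentralSeries_two hx
  rw [← relIndex_top_right,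
    relIndex_centralizer_singleton x ⊤ fun c _ ↦ center_le_centralizer _ (hcomm c)]
  refine card_dvd_of_le fun d hd ↦ ?_
  obtain ⟨c, -, rfl⟩ := mem_range_commutatorHom.mp hd
  exact hcomm c

theorem index_centralizer_eq_of_card_center_eq_prime {p : ℕ} (hp : p.Prime)
    (hZ : Nat.card (center G) = p) (hx : x ∈ Subgroup.upperCentralSeries G 2)
    (hxZ : x ∉ center G) : (centralizer {x}).index = p := by
  refine ((Nat.dvd_prime hp).mp (hZ ▸ index_centralizer_dvd_card_center hx)).resolve_left
    fun hindex ↦ hxZ (mem_center_iff.mpr fun g ↦ mem_centralizer_singleton_iff.mp ?_)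
  exact index_eq_one.mp hindex ▸ mem_top g

theorem upperCentralSeries_two_sdiff_center_subset :
    (Subgroup.upperCentralSeries G 2 : Set G) \ center G ⊆ centrallyShiftedSet G := by
  rintro a ⟨ha, haZ⟩
  obtain ⟨b, hb⟩ : ∃ b, b * a ≠ a * b := by simpa [mem_center_iff] using haZ
  exact ⟨b, commutatorElement_mem_center_of_mem_upperCentralSeries_two ha b,
    fun h ↦ hb (commutatorElement_eq_one_iff_mul_comm.mp h).symm⟩

theorem compl_centralizer_subset_centrallyShiftedSet
    (hx : x ∈ Subgroup.upperCentralSeries G 2) :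
    (centralizer {x} : Set G)ᶜ ⊆ centrallyShiftedSet G := by
  refine fun a ha ↦ ⟨x, ?_, fun h ↦ ha ?_⟩
  · rw [← commutatorElement_inv]
    exact inv_mem (commutatorElement_mem_center_of_mem_upperCentralSeries_two hx a)
  · exact mem_centralizer_singleton_iff.mpr (commutatorElement_eq_one_iff_mul_comm.mp h)

theorem center_lt_upperCentralSeries_two_inf_centralizer
    (hx : x ∈ Subgroup.upperCentralSeries G 2) (hxZ : x ∉ center G) :
    center G < Subgroup.upperCentralSeries G 2 ⊓ centralizer {x} := by
  refine lt_of_le_of_ne (le_inf ?_ (center_le_centralizer _)) fun h ↦ hxZ ?_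
  · exact Subgroup.upperCentralSeries_one G ▸ Subgroup.upperCentralSeries_mono G one_le_two
  · exact h ▸ ⟨hx, mem_centralizer_singleton_iff.mpr rfl⟩

theorem ncard_compl_union_sdiff [Finite G] {Z K C : Subgroup G} (hZK : Z ≤ K) (hKC : K ≤ C) :
    ((C : Set G)ᶜ ∪ ((K : Set G) \ Z)).ncard =
      Nat.card G - Nat.card C + (Nat.card K - Nat.card Z) := by
  rw [Set.ncard_union_eq, Set.ncard_compl, Set.ncard_sdiff hZK]
  · rfl
  · exact Set.disjoint_left.mpr fun g hgC hgK ↦ hgC (hKC hgK.1)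

end CentrallyShifted

section AbelianMaximalSubgroup

variable {G : Type*} [Group G] {p n : ℕ} [hp : Fact p.Prime] {x : G}

theorem prime_sq_le_card_of_center_lt (hG : Nat.card G = p ^ n)
    (hZ : Nat.card (center G) = p) {K : Subgroup G} (hZK : center G < K) :
    p ^ 2 ≤ Nat.card K := by
  have : Finite G := Nat.finite_of_card_ne_zero (hG ▸ pow_ne_zero n hp.out.ne_zero)
  obtain ⟨k, -, hk⟩ := (Nat.dvd_prime_pow hp.out).mp (hG ▸ K.card_subgroup_dvd_card)
  have hlt : p ^ 1 < p ^ k := by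
    rw [pow_one, ← hk, ← hZ]
    exact lt_of_not_ge fun hge ↦ hZK.ne (eq_of_le_of_card_ge hZK.le hge)
  exact hk ▸ Nat.pow_le_pow_right hp.out.pos ((Nat.pow_lt_pow_iff_right hp.out.one_lt).mp hlt)

theorem card_and_centrallyShiftedSet_eq_of_ncard_le (hn : n ≠ 0) (hG : Nat.card G = p ^ n)
    (hZ : Nat.card (center G) = p) (hx : x ∈ Subgroup.upperCentralSeries G 2)
    (hxZ : x ∉ center G)
    (hS : (centrallyShiftedSet G).ncard ≤ p ^ n - p ^ (n - 1) + p ^ 2 - p) :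
    Nat.card (Subgroup.upperCentralSeries G 2 ⊓ centralizer {x} : Subgroup G) = p ^ 2 ∧
      centrallyShiftedSet G = (centralizer {x} : Set G)ᶜ ∪
        ((Subgroup.upperCentralSeries G 2 ⊓ centralizer {x} : Subgroup G) : Set G) \
          center G := by
  have : Finite G := Nat.finite_of_card_ne_zero (hG ▸ pow_ne_zero n hp.out.ne_zero)
  set K := Subgroup.upperCentralSeries G 2 ⊓ centralizer {x}
  have hZK : center G < K := center_lt_upperCentralSeries_two_inf_centralizer hx hxZ
  have hsub : (centralizer {x} : Set G)ᶜ ∪ ((K : Set G) \ center G) ⊆ centrallyShiftedSet G :=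
    Set.union_subset (compl_centralizer_subset_centrallyShiftedSet hx) <|
      (Set.sdiff_subset_sdiff_left inf_le_left).trans upperCentralSeries_two_sdiff_center_subset
  have hcount : ((centralizer {x} : Set G)ᶜ ∪ ((K : Set G) \ center G)).ncard =
      p ^ n - p ^ (n - 1) + (Nat.card K - p) := by
    rw [ncard_compl_union_sdiff hZK.le inf_le_right, hG, hZ,
      card_eq_pow_pred_of_index_eq hp.out.pos hn hG
        (index_centralizer_eq_of_card_center_eq_prime hp.out hZ hx hxZ)]
  have hK : p ^ 2 ≤ Nat.card K := prime_sq_le_card_of_center_lt hG hZ hZK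
  have hpp : p ≤ p ^ 2 := Nat.le_self_pow two_ne_zero p
  have hle := Set.ncard_le_ncard hsub
  exact ⟨by lia, (Set.eq_of_subset_of_ncard_le hsub (by lia)).symm⟩

theorem upperCentralSeries_two_inf_centralizer_le_centralizer
    (hZ : Nat.card (center G) = p) (hx : x ∈ Subgroup.upperCentralSeries G 2)
    (hxZ : x ∉ center G)
    (hK : Nat.card (Subgroup.upperCentralSeries G 2 ⊓ centralizer {x} : Subgroup G) = p ^ 2) :
    Subgroup.upperCentralSeries G 2 ⊓ centralizer {x} ≤
      centralizer (centralizer {x} : Set G) := by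
  set K := Subgroup.upperCentralSeries G 2 ⊓ centralizer {x}
  have hZK : center G < K := center_lt_upperCentralSeries_two_inf_centralizer hx hxZ
  have hrel : (center G).relIndex K = p := by
    apply Nat.eq_of_mul_eq_mul_left hp.out.pos
    nth_rewrite 1 [← hZ]
    rw [← relIndex_bot_left, relIndex_mul_relIndex _ _ _ bot_le hZK.le, relIndex_bot_left, hK, sq]
  have hcov : center G ⋖ K := covBy_of_relIndex_prime hZK.le (hrel ▸ hp.out)
  have hlt : center G < K ⊓ centralizer (centralizer {x} : Set G) := by
    refine lt_of_le_of_ne (le_inf hZK.le (center_le_centralizer _)) fun h ↦ hxZ ?_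
    exact h ▸ ⟨⟨hx, mem_centralizer_singleton_iff.mpr rfl⟩,
      mem_centralizer_iff.mpr fun c hc ↦ mem_centralizer_singleton_iff.mp hc⟩
  exact inf_eq_left.mp ((hcov.eq_or_eq hlt.le inf_le_left).resolve_left hlt.ne')

theorem exists_isMulCommutative_index_eq_of_ncard_le (hn : 2 ≤ n) (hG : Nat.card G = p ^ n)
    (hZ : Nat.card (center G) = p)
    (hS : (centrallyShiftedSet G).ncard ≤ p ^ n - p ^ (n - 1) + p ^ 2 - p) :
    ∃ U : Subgroup G, U.index = p ∧ IsMulCommutative U := by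
  have : Finite G := Nat.finite_of_card_ne_zero (hG ▸ pow_ne_zero n hp.out.ne_zero)
  have : Group.IsNilpotent G := (IsPGroup.of_card hG).isNilpotent
  have hZtop : ¬ (⊤ : Subgroup G) ≤ center G := fun h ↦ by
    rw [top_le_iff.mp h, card_top, hG] at hZ
    exact (lt_self_pow₀ hp.out.one_lt (by lia)).ne' hZ
  obtain ⟨x, -, hxZ, hcomm⟩ := exists_mem_notMem_forall_commutator_mem hZtop
  have hx : x ∈ Subgroup.upperCentralSeries G 2 :=
    Subgroup.mem_upperCentralSeries_succ_iff.mpr fun g ↦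
      (Subgroup.upperCentralSeries_one G).symm ▸ hcomm g
  have hindex := index_centralizer_eq_of_card_center_eq_prime hp.out hZ hx hxZ
  obtain ⟨hK, hset⟩ := card_and_centrallyShiftedSet_eq_of_ncard_le (by lia) hG hZ hx hxZ hS
  have : (centralizer {x}).Normal := normal_of_index_eq_minFac_card
    (by rw [hindex, hG, hp.out.pow_minFac (by lia)])
  refine ⟨centralizer {x}, hindex, le_centralizer_iff_isMulCommutative.mp ?_⟩
  by_contra hnonabelian
  obtain ⟨y, hyC, hyA, hy⟩ := exists_mem_centrallyShiftedSet_of_not_le_centralizer hnonabelian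
  rw [hset] at hy
  exact hyA (upperCentralSeries_two_inf_centralizer_le_centralizer hZ hx hxZ hK
    (hy.resolve_left (not_not.mpr hyC)).1)

end AbelianMaximalSubgroup

section Characters

open scoped Pointwise

variable {k G : Type*} [Field k] [Group G] (V : FDRep k G)

theorem character_mul_of_ρ_eq_smul_one {V : FDRep k G} {s : G} {c : k} (hs : V.ρ s = c • 1)
    (g : G) : V.character (s * g) = c * V.character g := by
  rw [FDRep.character, FDRep.character, map_mul, hs, smul_mul_assoc, one_mul, map_smul,
    smul_eq_mul]

variable [IsAlgClosed k] [Simple V]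

theorem exists_eq_smul_one_of_commute_ρ {f : V →ₗ[k] V} (hf : ∀ g, Commute f (V.ρ g)) :
    ∃ c : k, f = c • 1 := by
  let F : V ⟶ V :=
    { hom := FGModuleCat.ofHom f
      comm := fun g ↦ by
        ext v
        exact LinearMap.congr_fun (hf g) v }
  obtain ⟨c, hc⟩ := endomorphism_simple_eq_smul_id k F
  exact ⟨c, (congrArg (fun φ : V ⟶ V ↦ φ.hom.hom.hom) hc).symm⟩

theorem exists_ρ_eq_smul_one_of_mem_upperCentralSeriesStep {s : G}
    (hs : s ∈ V.ρ.ker.upperCentralSeriesStep) : ∃ c : k, V.ρ s = c • 1 := by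
  refine exists_eq_smul_one_of_commute_ρ V fun g ↦ ?_
  have hsg : V.ρ ⁅s, g⁆ = 1 := hs g
  have hmul : s * g = ⁅s, g⁆ * (g * s) := by rw [commutatorElement_def]; group
  rw [commute_iff_eq, ← map_mul, hmul, map_mul, hsg, one_mul, map_mul]

theorem upperCentralSeriesStep_ker_ρ_ne_top (hnl : 1 < Module.finrank k V) :
    V.ρ.ker.upperCentralSeriesStep ≠ ⊤ := by
  intro htop
  have hscalar (f : V →ₗ[k] V) : ∃ c : k, c • (1 : V →ₗ[k] V) = f := by
    obtain ⟨c, hc⟩ := exists_eq_smul_one_of_commute_ρ V (f := f) fun g ↦ by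
      obtain ⟨d, hd⟩ := exists_ρ_eq_smul_one_of_mem_upperCentralSeriesStep V (htop ▸ mem_top g)
      exact hd ▸ (Commute.one_right f).smul_right d
    exact ⟨c, hc.symm⟩
  have hdim : Module.finrank k (V →ₗ[k] V) ≤ 1 := finrank_le_one _ hscalar
  rw [Module.finrank_linearMap] at hdim
  exact hdim.not_gt (Nat.one_lt_mul_iff.mpr ⟨by lia, by lia, .inl hnl⟩)

theorem card_upperCentralSeriesStep_ker_ρ_dvd_ncard_zeros :
    Nat.card (V.ρ.ker.upperCentralSeriesStep) ∣ {g | V.character g = 0}.ncard := by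
  have hinv : {g | V.character g = 0} * (V.ρ.ker.upperCentralSeriesStep : Set G) =
      {g | V.character g = 0} := by
    refine Set.Subset.antisymm ?_ (Set.subset_mul_left _ (one_mem _))
    rintro _ ⟨g, hg, s, hs, rfl⟩
    obtain ⟨c, hc⟩ := exists_ρ_eq_smul_one_of_mem_upperCentralSeriesStep V hs
    rw [Set.mem_ofPred_eq, FDRep.char_mul_comm, character_mul_of_ρ_eq_smul_one hc, hg, mul_zero]
  rw [← Nat.card_coe_set_eq, ← hinv, card_mul_eq_card_subgroup_mul_card_quotient]
  exact dvd_mul_right _ _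

theorem centrallyShiftedSet_subset_zeros (hfaithful : V.ρ.ker = ⊥) :
    centrallyShiftedSet G ⊆ {g | V.character g = 0} := by
  rintro a ⟨b, hz, hz1⟩
  obtain ⟨c, hc⟩ := exists_ρ_eq_smul_one_of_mem_upperCentralSeriesStep V
    (center_le_upperCentralSeriesStep _ hz)
  have hc1 : c ≠ 1 := fun h ↦ hz1 <| mem_bot.mp <| hfaithful ▸ by
    rw [MonoidHom.mem_ker, hc, h, one_smul]
  have hshift : V.character a = c * V.character a := by
    calc V.character a = V.character (⁅a, b⁆ * (b * a * b⁻¹)) := by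
          congr 1; rw [commutatorElement_def]; group
      _ = c * V.character a := by rw [character_mul_of_ρ_eq_smul_one hc, FDRep.char_conj]
  by_contra hne
  exact hc1 (mul_right_cancel₀ hne (by rw [one_mul, ← hshift]))

theorem card_center_and_ker_ρ_eq_bot_of_not_sq_dvd {p : ℕ} [hp : Fact p.Prime] [Finite G]
    (hG : IsPGroup p G) (hnl : 1 < Module.finrank k V)
    (hzeros : ¬ p ^ 2 ∣ {g | V.character g = 0}.ncard) :
    Nat.card (center G) = p ∧ V.ρ.ker = ⊥ := by
  have : Group.IsNilpotent G := hG.isNilpotent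
  have dvd_card {H : Subgroup G} (hH : H ≠ ⊥) : p ∣ Nat.card H :=
    (hG.to_subgroup H).card_eq_or_dvd.resolve_left (mt card_eq_one.mp hH)
  set S := V.ρ.ker.upperCentralSeriesStep
  have hStop : S ≠ ⊤ := upperCentralSeriesStep_ker_ρ_ne_top V hnl
  have hSp : Nat.card S ∣ p := by
    obtain ⟨j, hj⟩ := (hG.to_subgroup S).exists_card_eq
    have hj1 : j ≤ 1 := by
      by_contra! h
      exact hzeros ((pow_dvd_pow p h).trans
        (hj ▸ card_upperCentralSeriesStep_ker_ρ_dvd_ncard_zeros V))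
    simpa [hj] using pow_dvd_pow p hj1
  have hKS : V.ρ.ker ≤ S := fun s hs g ↦
    commutator_le_left V.ρ.ker ⊤ (commutator_mem_commutator hs (mem_top g))
  have hZS : center G ≤ S := center_le_upperCentralSeriesStep _
  have : Nontrivial G := by
    by_contra h
    rw [not_nontrivial_iff_subsingleton] at h
    exact hStop (Subsingleton.elim _ _)
  refine ⟨((card_dvd_of_le hZS).trans hSp).antisymm (dvd_card hG.bot_lt_center.ne'), ?_⟩
  by_contra hK
  obtain ⟨y, -, hyK, hy⟩ := exists_mem_notMem_forall_commutator_mem (C := ⊤) (A := V.ρ.ker)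
    fun h ↦ hStop (top_le_iff.mp (h.trans hKS))
  have hKS_eq : V.ρ.ker = S :=
    eq_of_le_of_card_ge hKS (Nat.le_of_dvd Nat.card_pos (hSp.trans (dvd_card hK)))
  exact hyK (hKS_eq ▸ hy)

end Characters

theorem not_prime_sq_dvd_sub_add_sub {p n : ℕ} (hp : p.Prime) (hn : 3 ≤ n) :
    ¬ p ^ 2 ∣ p ^ n - p ^ (n - 1) + p ^ 2 - p := by
  intro hdvd
  have hsum : p ^ 2 ∣ p ^ n - p ^ (n - 1) + p ^ 2 :=
    dvd_add (Nat.dvd_sub (pow_dvd_pow p (by lia)) (pow_dvd_pow p (by lia))) dvd_rfl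
  have hlt : p < p ^ 2 := lt_self_pow₀ hp.one_lt one_lt_two
  have hp2 := Nat.dvd_sub hsum hdvd
  rw [Nat.sub_sub_self (by lia)] at hp2
  exact hlt.not_ge (Nat.le_of_dvd hp.pos hp2)

theorem stmt3_general {k G : Type*} [Field k] [IsAlgClosed k] [Group G] {p n : ℕ} (hp : p.Prime)
    (hG : Nat.card G = p ^ n) (V : FDRep k G) [Simple V] (hnl : 1 < Module.finrank k V)
    (hz : {g : G | V.character g = 0}.ncard = p ^ n - p ^ (n - 1) + p ^ 2 - p) :
    nilClass G = n - 1 ∧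
      ∃ U : Subgroup G, U.index = p ∧ ∀ x ∈ U, ∀ y ∈ U, x * y = y * x := by
  have : Fact p.Prime := ⟨hp⟩
  have : Finite G := Nat.finite_of_card_ne_zero (hG ▸ pow_ne_zero n hp.ne_zero)
  have hpG : IsPGroup p G := .of_card hG
  have : Group.IsNilpotent G := hpG.isNilpotent
  have hn : 3 ≤ n := by
    by_contra! hlt
    have := isMulCommutative_of_card_eq_prime_pow hG (by lia)
    exact upperCentralSeriesStep_ker_ρ_ne_top V hnl (top_le_iff.mp
      (center_eq_top (G := G) ▸ center_le_upperCentralSeriesStep _))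
  obtain ⟨hZ, hfaithful⟩ := card_center_and_ker_ρ_eq_bot_of_not_sq_dvd V hpG hnl
    (hz ▸ not_prime_sq_dvd_sub_add_sub hp hn)
  obtain ⟨U, hU, hUcomm⟩ := exists_isMulCommutative_index_eq_of_ncard_le (by lia) hG hZ
    (hz ▸ Set.ncard_le_ncard (centrallyShiftedSet_subset_zeros V hfaithful))
  refine ⟨?_, U, hU, fun x hx y hy ↦ (le_centralizer U hy) x hx⟩
  rw [nilClass_eq_nilpotencyClass]
  exact nilpotencyClass_eq_of_card_center_eq_prime (by lia) hG hZ hU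

/-- If a non-linear irreducible complex character of a `p`-group of order
`p^n` vanishes at exactly `p^n - p^(n-1) + p^2 - p` elements, then `G` has maximal class
(nilpotency class `n - 1`) and `G` has an abelian subgroup of index `p`. -/
theorem stmt3 {G : Type} [Group G] [Fintype G] {p n : ℕ} (hp : p.Prime)
    (hG : Fintype.card G = p ^ n)
    (V : FDRep ℂ G) (hV : Simple V)
    (hnl : 1 < Module.finrank ℂ V)
    (hz : {g : G | V.character g = 0}.ncard = p ^ n - p ^ (n - 1) + p ^ 2 - p) :
    nilClass G = n - 1 ∧
      ∃ U : Subgroup G, U.index = p ∧ ∀ x ∈ U, ∀ y ∈ U, x * y = y * x :=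
  stmt3_general hp (Nat.card_eq_fintype_card.trans hG) V hnl hz
end

section
/- Let p be a prime and let G be a non-abelian finite p-group of order p^n whose nilpotency class is 2. Then every non-linear irreducible complex character χ of G vanishes at at least p^n − p^(n−2) elements of G. -/
open CategoryTheory

/-!
Let `Z` be the subgroup of elements of `G` acting by scalars. If `g ∉ Z`, then by Schur's lemma
`ρ g` fails to commute with some `ρ h`. Commutators are central, so they act by scalars and
`ρ (h * g * h⁻¹) = c • ρ g` with `c ≠ 1`; taking traces gives `χ g = c * χ g`, that is `χ g = 0`.
On `Z` we have `χ g * χ g⁻¹ = χ(1) ^ 2`, so the orthogonality relation `∑ χ g * χ g⁻¹ = |G|` becomes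
`|G : Z| = χ(1) ^ 2`. In a `p`-group this index is divisible by `p ^ 2` as soon as `χ(1) > 1`.
-/

section NilpotencyClass

variable {G : Type*} [Group G]

lemma upperCentralSeries_nilClass (h : nilClass G ≠ 0) :
    Subgroup.upperCentralSeries G (nilClass G) = ⊤ :=
  Nat.sInf_mem (Nat.nonempty_of_pos_sInf (Nat.pos_of_ne_zero h))

lemma commutator_le_center_of_nilClass_eq_two (h : nilClass G = 2) :
    commutator G ≤ Subgroup.center G := by
  have htop : Subgroup.upperCentralSeries G 2 = ⊤ :=
    h ▸ upperCentralSeries_nilClass (h ▸ two_ne_zero)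
  have hle := Subgroup.commutator_upperCentralSeries_top_le G 1
  rwa [htop, Subgroup.upperCentralSeries_one] at hle

end NilpotencyClass

section SimpleObjects

variable {k G : Type*} [Field k] [Monoid G]

/-- The inclusion of a subrepresentation, as a morphism of `FDRep k G`; it translates the
categorical `Simple` into `Representation.IsIrreducible`. -/
noncomputable def subrepresentationInclusion (V : FDRep k G) (U : Subrepresentation V.ρ) :
    FDRep.of U.toRepresentation ⟶ V where
  hom := FGModuleCat.ofHom U.toSubmodule.subtype
  comm _ := rfl

instance mono_subrepresentationInclusion (V : FDRep k G) (U : Subrepresentation V.ρ) :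
    Mono (subrepresentationInclusion V U) :=
  (forget (FDRep k G)).mono_of_mono_map ((mono_iff_injective _).mpr Subtype.val_injective)

lemma nontrivial_of_simple (V : FDRep k G) [Simple V] : Nontrivial V := by
  by_contra! hV
  exact id_nonzero V (by ext v; exact Subsingleton.elim _ _)

instance isIrreducible_ρ (V : FDRep k G) [Simple V] : Representation.IsIrreducible V.ρ := by
  have := nontrivial_of_simple V
  refine { exists_pair_ne := ⟨⊥, ⊤, fun h => ?_⟩, eq_bot_or_eq_top := fun U => ?_ }
  · obtain ⟨v, hv⟩ := exists_ne (0 : V)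
    have hbot : v ∈ (⊥ : Subrepresentation V.ρ) := h ▸ Submodule.mem_top
    exact hv hbot
  · by_cases hzero : subrepresentationInclusion V U = 0
    · refine .inl <| Subrepresentation.toSubmodule_injective <| (Submodule.eq_bot_iff _).mpr ?_
      intro v hv
      exact ConcreteCategory.congr_hom hzero ⟨v, hv⟩
    · have := isIso_of_mono_of_nonzero hzero
      refine .inr <| Subrepresentation.toSubmodule_injective <| (Submodule.eq_top_iff').mpr ?_
      intro v
      let e := FDRep.isoToLinearEquiv (asIso (subrepresentationInclusion V U))
      exact e.apply_symm_apply v ▸ (e.symm v).2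

end SimpleObjects

section ScalarSubgroup

open scoped commutatorElement MonoidAlgebra

variable {k G V : Type*} [Group G] [AddCommGroup V]

/-- The subgroup of elements acting by scalars, called the center `Z(χ)` of the character `χ` of
`ρ` in the literature. The scalars are required to be units, so that inverses come for free. -/
def scalarSubgroup [CommRing k] [Module k V] (ρ : Representation k G V) : Subgroup G :=
  (Units.map (algebraMap k (Module.End k V)).toMonoidHom).range.comap (MonoidHom.toHomUnits ρ)

lemma mem_scalarSubgroup_iff [CommRing k] [Module k V] {ρ : Representation k G V} {g : G} :
    g ∈ scalarSubgroup ρ ↔ ∃ c : kˣ, ρ g = (c : k) • 1 := by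
  simp only [scalarSubgroup, Subgroup.mem_comap, MonoidHom.mem_range, Units.ext_iff]
  simp [Algebra.algebraMap_eq_smul_one, eq_comm]

variable [Field k] [Module k V] {ρ : Representation k G V}

lemma commute_of_commutatorElement_mem_of_character_ne_zero {g h : G}
    (hgh : ⁅h, g⁆ ∈ scalarSubgroup ρ) (hg : ρ.character g ≠ 0) : Commute (ρ h) (ρ g) := by
  obtain ⟨c, hc⟩ := mem_scalarSubgroup_iff.mp hgh
  have hconj : ρ (h * g * h⁻¹) = (c : k) • ρ g := by
    rw [← inv_mul_cancel_right (h * g * h⁻¹) g, map_mul, ← commutatorElement_def, hc,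
      smul_one_mul]
  have hchar : ρ.character g = c * ρ.character g := by
    rw [← smul_eq_mul, Representation.character, ← map_smul, ← hconj]
    exact (ρ.char_conj g h).symm
  have hone : (c : k) = 1 := (right_eq_mul₀ hg).mp hchar
  calc ρ h * ρ g = ρ (h * g * h⁻¹) * ρ h := by rw [← map_mul, ← map_mul, inv_mul_cancel_right]
    _ = ρ g * ρ h := by rw [hconj, hone, one_smul]

lemma character_mul_character_inv_of_mem_scalarSubgroup [FiniteDimensional k V] {g : G}
    (hg : g ∈ scalarSubgroup ρ) :
    ρ.character g * ρ.character g⁻¹ = (Module.finrank k V : k) ^ 2 := by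
  obtain ⟨c, hc⟩ := mem_scalarSubgroup_iff.mp hg
  have hinv : (c : k) • ρ g⁻¹ = 1 := by
    rw [← smul_one_mul, ← hc, ← map_mul, mul_inv_cancel, map_one]
  calc ρ.character g * ρ.character g⁻¹
      = LinearMap.trace k V (1 : Module.End k V) * LinearMap.trace k V ((c : k) • ρ g⁻¹) := by
        simp only [Representation.character, hc, map_smul, smul_eq_mul]
        ring
    _ = (Module.finrank k V : k) ^ 2 := by rw [hinv, LinearMap.trace_one, sq]

variable [FiniteDimensional k V] [IsAlgClosed k] [ρ.IsIrreducible]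

lemma mem_scalarSubgroup_of_forall_commute {g : G} (hg : ∀ h, Commute (ρ h) (ρ g)) :
    g ∈ scalarSubgroup ρ := by
  let f : ρ.IntertwiningMap ρ := ⟨ρ g, fun h => (hg h).symm⟩
  obtain ⟨c, hc⟩ :=
    Representation.IsIrreducible.algebraMap_intertwiningMap_bijective_of_isAlgClosed.surjective f
  have hρ : ρ g = c • 1 := (congrArg Representation.IntertwiningMap.toLinearMap hc).symm
  have hc_ne : c ≠ 0 := by
    have : Nontrivial V := IsSimpleModule.nontrivial k[G] ρ.asModule
    rintro rfl
    exact not_isUnit_zero (zero_smul k (1 : Module.End k V) ▸ hρ ▸ (Group.isUnit g).map ρ)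
  exact mem_scalarSubgroup_iff.mpr ⟨Units.mk0 c hc_ne, hρ⟩

variable (ρ) in
lemma center_le_scalarSubgroup : Subgroup.center G ≤ scalarSubgroup ρ := fun g hg =>
  mem_scalarSubgroup_of_forall_commute fun h =>
    (show Commute h g from Subgroup.mem_center_iff.mp hg h).map ρ

lemma character_eq_zero_of_notMem_scalarSubgroup (hcomm : commutator G ≤ scalarSubgroup ρ) {g : G}
    (hg : g ∉ scalarSubgroup ρ) : ρ.character g = 0 := by
  contrapose! hg
  exact mem_scalarSubgroup_of_forall_commute fun h =>
    commute_of_commutatorElement_mem_of_character_ne_zero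
      (hcomm (Subgroup.commutator_mem_commutator (Subgroup.mem_top h) (Subgroup.mem_top g))) hg

variable (ρ) in
lemma sum_character_mul_character_inv [Fintype G] [NeZero (Nat.card G : k)] :
    ∑ g, ρ.character g * ρ.character g⁻¹ = Nat.card G := by
  have hcard : (Nat.card G : k) ≠ 0 := NeZero.ne _
  have := invertibleOfNonzero hcard
  have horth := Representation.char_orthonormal ρ ρ
  rw [if_pos ⟨.refl ρ⟩] at horth
  exact (inv_mul_eq_one₀ hcard).mp horth |>.symm

variable [Finite G] [CharZero k]

theorem index_scalarSubgroup (hcomm : commutator G ≤ scalarSubgroup ρ) :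
    (scalarSubgroup ρ).index = Module.finrank k V ^ 2 := by
  classical
  have := Fintype.ofFinite G
  have hsum : (Nat.card (scalarSubgroup ρ) : k) * (Module.finrank k V : k) ^ 2 = Nat.card G :=
    calc (Nat.card (scalarSubgroup ρ) : k) * (Module.finrank k V : k) ^ 2
        = ∑ g with g ∈ scalarSubgroup ρ, ρ.character g * ρ.character g⁻¹ := by
          rw [Finset.sum_congr rfl fun g hg =>
            character_mul_character_inv_of_mem_scalarSubgroup (Finset.mem_filter.mp hg).2,
            Finset.sum_const, nsmul_eq_mul, ← Fintype.card_subtype, Nat.card_eq_fintype_card]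
      _ = ∑ g, ρ.character g * ρ.character g⁻¹ :=
          Finset.sum_filter_of_ne fun g _ hne => by
            contrapose! hne
            rw [character_eq_zero_of_notMem_scalarSubgroup hcomm hne, zero_mul]
      _ = Nat.card G := sum_character_mul_character_inv ρ
  apply Nat.eq_of_mul_eq_mul_left (Nat.card_pos (α := scalarSubgroup ρ))
  rw [Subgroup.card_mul_index]
  exact_mod_cast hsum.symm

lemma card_scalarSubgroup_le_of_card_eq_prime_pow {p n : ℕ} (hp : p.Prime)
    (hG : Nat.card G = p ^ n) (hcomm : commutator G ≤ scalarSubgroup ρ)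
    (hdim : 1 < Module.finrank k V) : Nat.card (scalarSubgroup ρ) ≤ p ^ (n - 2) := by
  have hindex := index_scalarSubgroup hcomm
  have hdvd : Module.finrank k V ∣ p ^ n :=
    (dvd_pow_self _ two_ne_zero).trans (hindex ▸ hG ▸ (scalarSubgroup ρ).index_dvd_card)
  have hp_dvd : p ∣ Module.finrank k V := by
    obtain ⟨m, -, hm⟩ := (Nat.dvd_prime_pow hp).mp hdvd
    rw [hm]
    exact dvd_pow_self p fun hm0 => hdim.ne' (by rw [hm, hm0, pow_zero])
  have hmul : Nat.card (scalarSubgroup ρ) * p ^ 2 ∣ p ^ n := by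
    rw [← hG, ← (scalarSubgroup ρ).card_mul_index, hindex]
    exact mul_dvd_mul_left _ (pow_dvd_pow_of_dvd hp_dvd 2)
  have hn : 2 ≤ n := (Nat.pow_dvd_pow_iff_le_right hp.one_lt).mp (dvd_of_mul_left_dvd hmul)
  apply Nat.le_of_dvd (pow_pos hp.pos _)
  rwa [← Nat.sub_add_cancel hn, pow_add, Nat.mul_dvd_mul_iff_right (pow_pos hp.pos 2)] at hmul

end ScalarSubgroup

theorem stmt6_general {k G V : Type*} [Field k] [IsAlgClosed k] [CharZero k] [Group G] [Finite G]
    [AddCommGroup V] [Module k V] [FiniteDimensional k V] (ρ : Representation k G V)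
    [ρ.IsIrreducible] {p n : ℕ} (hp : p.Prime) (hG : Nat.card G = p ^ n)
    (hcomm : commutator G ≤ scalarSubgroup ρ) (hdim : 1 < Module.finrank k V) :
    p ^ n - p ^ (n - 2) ≤ {g : G | ρ.character g = 0}.ncard :=
  calc p ^ n - p ^ (n - 2)
      ≤ Nat.card G - Nat.card (scalarSubgroup ρ) := by
        rw [hG]
        exact Nat.sub_le_sub_left (card_scalarSubgroup_le_of_card_eq_prime_pow hp hG hcomm hdim) _
    _ = ((scalarSubgroup ρ : Set G)ᶜ).ncard := (Set.ncard_compl _).symm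
    _ ≤ {g : G | ρ.character g = 0}.ncard :=
        Set.ncard_le_ncard fun _ => character_eq_zero_of_notMem_scalarSubgroup hcomm

/-- If `G` is a non-abelian `p`-group of order `p^n` of nilpotency class `2`,
then every non-linear irreducible complex character of `G` vanishes at at least
`p^n - p^(n-2)` elements. -/
theorem stmt6 {G : Type} [Group G] [Fintype G] {p n : ℕ} (hp : p.Prime)
    (hG : Fintype.card G = p ^ n)
    (hna : ¬ ∀ x y : G, x * y = y * x)
    (hclass : nilClass G = 2)
    (V : FDRep ℂ G) (hV : Simple V)
    (hnl : 1 < Module.finrank ℂ V) :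
    p ^ n - p ^ (n - 2) ≤ {g : G | V.character g = 0}.ncard :=
  stmt6_general V.ρ hp (Nat.card_eq_fintype_card.trans hG)
    ((commutator_le_center_of_nilClass_eq_two hclass).trans (center_le_scalarSubgroup V.ρ)) hnl
end
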